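/- arXiv:1302.0804 — 2 statements merged into one kernel-verified Lean document; each statement's English description precedes it below -/
import Mathlib

section
/- Let A, B, C, D, D′ be points in 3-dimensional Euclidean space with D ≠ D′ such that all six pairwise distances among {A, B, C, D} equal ℓ > 0 and all six pairwise distances among {A, B, C, D′} equal ℓ (two regular tetrahedra sharing the face ABC, lying on opposite sides of its plane). Then the distance between the circumcenter of the tetrahedron ABCD and the circumcenter of the tetrahedron ABCD′ equals (√6/6)·ℓ. -/
open Real

/-!
Both apexes are equidistant from the vertices of the common facet, at the same distance, so they are
reflections of each other in it. Hence the simplices, and in particular their circumcenters, are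
reflections of each other too, and the circumcenters are at twice the distance from either of them
to the facet. By Pythagoras that distance is `√(R ^ 2 - r ^ 2)`, where `R` and `r` are the
circumradii of the simplex and of the facet; a regular `n`-simplex of edge length `ℓ` has squared
circumradius `n / (2 * (n + 1)) * ℓ ^ 2`.
-/

open Affine EuclideanGeometry

theorem dist_reflection_self {𝕜 V P : Type*} [RCLike 𝕜] [NormedAddCommGroup V]
    [InnerProductSpace 𝕜 V] [MetricSpace P] [NormedAddTorsor V P] (s : AffineSubspace 𝕜 P)
    [Nonempty s] [s.direction.HasOrthogonalProjection] (p : P) :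
    dist p (reflection s p) = 2 * dist p (orthogonalProjection s p) := by
  rw [reflection_apply', ← Equiv.pointReflection_apply, dist_comm, dist_pointReflection_right 𝕜,
    RCLike.norm_two, dist_comm]

section

variable {V P : Type*} [NormedAddCommGroup V] [InnerProductSpace ℝ V] [MetricSpace P]
  [NormedAddTorsor V P]

theorem dist_affineCombination_sq_of_dist_eq {ι : Type*} {s : Finset ι} {p : ι → P} {ℓ : ℝ}
    (hp : ∀ i ∈ s, ∀ j ∈ s, i ≠ j → dist (p i) (p j) = ℓ) {w₁ w₂ : ι → ℝ}
    (h₁ : ∑ i ∈ s, w₁ i = 1) (h₂ : ∑ i ∈ s, w₂ i = 1) :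
    dist (s.affineCombination ℝ p w₁) (s.affineCombination ℝ p w₂) ^ 2 =
      (∑ i ∈ s, (w₁ i - w₂ i) ^ 2) * ℓ ^ 2 / 2 := by
  classical
  set u := w₁ - w₂ with hu
  have sum_u : ∑ i ∈ s, u i = 0 := by simp [hu, h₁, h₂]
  have row : ∀ i ∈ s, ∑ j ∈ s, u i * u j * (dist (p i) (p j) * dist (p i) (p j)) =
      -(u i ^ 2 * ℓ ^ 2) := fun i hi ↦ by
    have sum_erase : ∑ j ∈ s.erase i, u j = -u i := by
      linarith [Finset.add_sum_erase s u hi]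
    calc ∑ j ∈ s, u i * u j * (dist (p i) (p j) * dist (p i) (p j))
        = ∑ j ∈ s.erase i, u i * u j * (dist (p i) (p j) * dist (p i) (p j)) := by
          simp [← Finset.add_sum_erase s _ hi]
      _ = ∑ j ∈ s.erase i, u i * ℓ ^ 2 * u j := Finset.sum_congr rfl fun j hj ↦ by
          rw [hp i hi j (Finset.mem_of_mem_erase hj) (Finset.ne_of_mem_erase hj).symm]; ring
      _ = -(u i ^ 2 * ℓ ^ 2) := by rw [← Finset.mul_sum, sum_erase]; ring
  rw [sq, dist_affineCombination p h₁ h₂, Finset.sum_congr rfl row, Finset.sum_neg_distrib,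
    neg_neg, Finset.sum_mul]
  simp only [hu, Pi.sub_apply]

variable {n : ℕ}

theorem dist_point_centroid_sq_of_dist_eq {T : Simplex ℝ P n} {ℓ : ℝ}
    (hT : ∀ i j, i ≠ j → dist (T.points i) (T.points j) = ℓ) (i : Fin (n + 1)) :
    dist (T.points i) T.centroid ^ 2 = n / (2 * (n + 1)) * ℓ ^ 2 := by
  have sum_sq : ∑ j, ((Pi.single i 1 : Fin (n + 1) → ℝ) j - (n + 1 : ℝ)⁻¹) ^ 2 = n / (n + 1) :=
    calc ∑ j, ((Pi.single i 1 : Fin (n + 1) → ℝ) j - (n + 1 : ℝ)⁻¹) ^ 2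
        = (1 - (n + 1 : ℝ)⁻¹) ^ 2 + n * ((n + 1 : ℝ)⁻¹) ^ 2 := by
          simp [Fin.sum_univ_succAbove _ i]
      _ = n / (n + 1) := by field_simp; ring
  rw [T.centroid_eq_affineCombination,
    ← Finset.univ.affineCombination_piSingle ℝ T.points (Finset.mem_univ i),
    dist_affineCombination_sq_of_dist_eq (fun i _ j _ ↦ hT i j) (by simp)
      (Finset.univ.sum_centroidWeights_eq_one_of_nonempty ℝ Finset.univ_nonempty)]
  simp only [Finset.centroidWeights_apply, Finset.card_univ, Fintype.card_fin, Nat.cast_add,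
    Nat.cast_one, sum_sq]
  field_simp

theorem circumradius_sq_of_dist_eq {T : Simplex ℝ P n} {ℓ : ℝ}
    (hT : ∀ i j, i ≠ j → dist (T.points i) (T.points j) = ℓ) :
    T.circumradius ^ 2 = n / (2 * (n + 1)) * ℓ ^ 2 := by
  have dist_centroid (i) : dist (T.points i) T.centroid = √(n / (2 * (n + 1)) * ℓ ^ 2) := by
    rw [← dist_point_centroid_sq_of_dist_eq hT i, sqrt_sq dist_nonneg]
  rw [← T.eq_circumradius_of_dist_eq T.centroid_mem_affineSpan dist_centroid,
    sq_sqrt (by positivity)]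

theorem dist_circumcenter_face_circumcenter_sq (T : Simplex ℝ P n) {m : ℕ}
    {fs : Finset (Fin (n + 1))} (h : fs.card = m + 1) :
    dist T.circumcenter (T.face h).circumcenter ^ 2 =
      T.circumradius ^ 2 - (T.face h).circumradius ^ 2 := by
  simp only [sq]
  exact (T.face h).dist_circumcenter_sq_eq_sq_sub_circumradius (by simp [Simplex.face_points])
    (T.orthogonalProjection_circumcenter h) (subset_affineSpan ℝ _ ⟨0, rfl⟩)

theorem dist_circumcenter_face_circumcenter_sq_of_dist_eq {T : Simplex ℝ P n} {ℓ : ℝ}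
    (hT : ∀ i j, i ≠ j → dist (T.points i) (T.points j) = ℓ) {m : ℕ}
    {fs : Finset (Fin (n + 1))} (h : fs.card = m + 1) :
    dist T.circumcenter (T.face h).circumcenter ^ 2 =
      (n - m) / (2 * (n + 1) * (m + 1)) * ℓ ^ 2 := by
  have hface : ∀ i j, i ≠ j → dist ((T.face h).points i) ((T.face h).points j) = ℓ :=
    fun i j hij ↦ by
      simpa only [Simplex.face_points] using hT _ _ ((fs.orderEmbOfFin h).injective.ne hij)
  rw [dist_circumcenter_face_circumcenter_sq, circumradius_sq_of_dist_eq hT,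
    circumradius_sq_of_dist_eq hface]
  field_simp
  ring

variable [NeZero n] {T T' : Simplex ℝ P n} {i : Fin (n + 1)}

theorem eq_reflection_faceOpposite_of_dist_eq {p : P} {r : ℝ}
    (hp : p ∈ affineSpan ℝ (Set.range T.points)) (hne : p ≠ T.points i)
    (hTr : ∀ j ≠ i, dist (T.points j) (T.points i) = r)
    (hpr : ∀ j ≠ i, dist (T.points j) p = r) :
    p = reflection (affineSpan ℝ (Set.range (T.faceOpposite i).points)) (T.points i) := by
  have range_eq :
      insert (T.points i) (Set.range (T.faceOpposite i).points) = Set.range T.points := by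
    rw [T.range_faceOpposite_points, ← Set.image_insert_eq, Set.insert_eq, Set.union_compl_self,
      Set.image_univ]
  have dist_face {q : P} (hq : ∀ j ≠ i, dist (T.points j) q = r) (j) :
      dist ((T.faceOpposite i).points j) q = r := by
    rw [T.faceOpposite_point_eq_point_succAbove]
    exact hq _ (i.succAbove_ne _)
  exact (eq_or_eq_reflection_of_dist_eq (range_eq ▸ hp)
    (subset_affineSpan ℝ _ (Set.mem_insert _ _)) (dist_face hpr) (dist_face hTr)).resolve_left hne

theorem circumcenter_eq_reflection_faceOpposite
    (hface : ∀ j ≠ i, T.points j = T'.points j)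
    (hi : T'.points i =
      reflection (affineSpan ℝ (Set.range (T.faceOpposite i).points)) (T.points i)) :
    T'.circumcenter =
      reflection (affineSpan ℝ (Set.range (T.faceOpposite i).points)) T.circumcenter := by
  set σ := reflection (affineSpan ℝ (Set.range (T.faceOpposite i).points))
  have map_eq : T' = T.map σ.toAffineIsometry.toAffineMap σ.injective := by
    ext j
    by_cases hj : j = i
    · rw [hj]
      exact hi
    · rw [← hface j hj]
      exact ((reflection_eq_self_iff _).2 <| T.points_mem_affineSpan_faceOpposite.2 hj).symm
  rw [map_eq]
  exact T.circumcenter_map σ.toAffineIsometry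

theorem dist_reflection_faceOpposite_circumcenter (T : Simplex ℝ P n) (i : Fin (n + 1)) :
    dist T.circumcenter
        (reflection (affineSpan ℝ (Set.range (T.faceOpposite i).points)) T.circumcenter) =
      2 * dist T.circumcenter (T.faceOpposite i).circumcenter := by
  rw [dist_reflection_self]
  exact congrArg (2 * dist _ ·) (T.orthogonalProjection_circumcenter _)

theorem adjacent_regular_tetrahedra_circumcenter_distance_general {ℓ : ℝ}
    (hT : ∀ j k, j ≠ k → dist (T.points j) (T.points k) = ℓ)
    (hT' : ∀ j k, j ≠ k → dist (T'.points j) (T'.points k) = ℓ)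
    (hface : ∀ j ≠ i, T.points j = T'.points j) (hi : T.points i ≠ T'.points i)
    (hspan : T'.points i ∈ affineSpan ℝ (Set.range T.points)) :
    dist T.circumcenter T'.circumcenter = √(2 / (n * (n + 1))) * ℓ := by
  have hℓ : 0 ≤ ℓ := hT 0 (Fin.last n) (Fin.last_pos' (n := n)).ne ▸ dist_nonneg
  have apex : T'.points i =
      reflection (affineSpan ℝ (Set.range (T.faceOpposite i).points)) (T.points i) :=
    eq_reflection_faceOpposite_of_dist_eq hspan hi.symm (fun j hj ↦ hT j i hj)
      fun j hj ↦ hface j hj ▸ hT' j i hj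
  have height : dist T.circumcenter (T.faceOpposite i).circumcenter ^ 2 =
      1 / (2 * n * (n + 1)) * ℓ ^ 2 := by
    rw [Simplex.faceOpposite, dist_circumcenter_face_circumcenter_sq_of_dist_eq hT,
      Nat.cast_pred (NeZero.pos n), sub_sub_cancel, sub_add_cancel, mul_right_comm]
  rw [circumcenter_eq_reflection_faceOpposite hface apex,
    dist_reflection_faceOpposite_circumcenter,
    ← sq_eq_sq₀ (by positivity) (mul_nonneg (sqrt_nonneg _) hℓ), mul_pow, height, mul_pow,
    sq_sqrt (by positivity)]
  field_simp

end

/-- Two regular tetrahedra of edge length `ℓ` sharing a face (with distinct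
opposite vertices): the distance between their circumcenters equals `(√6/6)·ℓ`.
This is the length of the circumcentric-dual edge joining the circumcenters of
two adjacent regular tetrahedra. -/
theorem adjacent_regular_tetrahedra_circumcenter_distance
    (ℓ : ℝ) (hℓ : 0 < ℓ)
    (T T' : Affine.Simplex ℝ (EuclideanSpace ℝ (Fin 3)) 3)
    (hT : ∀ i j : Fin 4, i ≠ j → dist (T.points i) (T.points j) = ℓ)
    (hT' : ∀ i j : Fin 4, i ≠ j → dist (T'.points i) (T'.points j) = ℓ)
    (hA : T.points 0 = T'.points 0)
    (hB : T.points 1 = T'.points 1)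
    (hC : T.points 2 = T'.points 2)
    (hD : T.points 3 ≠ T'.points 3) :
    dist T.circumcenter T'.circumcenter = Real.sqrt 6 / 6 * ℓ := by
  have hface : ∀ j ≠ 3, T.points j = T'.points j := by simp [Fin.forall_fin_succ, hA, hB, hC]
  have span_eq_top : affineSpan ℝ (Set.range T.points) = ⊤ :=
    T.independent.affineSpan_eq_top_iff_card_eq_finrank_add_one.2 (by simp)
  have sqrt_eq : √(2 / ((3 : ℕ) * ((3 : ℕ) + 1))) = √6 / 6 := by
    rw [sqrt_eq_iff_mul_self_eq (by positivity) (by positivity), div_mul_div_comm,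
      mul_self_sqrt (by norm_num)]
    norm_num
  rw [adjacent_regular_tetrahedra_circumcenter_distance_general hT hT' hface hD
    (span_eq_top ▸ AffineSubspace.mem_top ..), sqrt_eq]
end

section
/- Let θ = arccos(1/3) and c₅ := (6√2/5)·((√2·600)/(3π²))^{2/3}·(2π − 5θ). Then 0.015 < c₅/2 − 1 < 0.025 (i.e., the 600-cell value of the simplicial Ricci component deviates from the continuum value 2 by about 2.0%). -/
open Real

/-!
Since `θ = arccos (1/3)`, the sine of the deficit angle `2π - pθ` is a Chebyshev polynomial of the
second kind evaluated at `1/3`, times `-sin θ = -2√2/3`. For `p = 5` the deficit angle lies in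
`[-π/2, π/2]`, so it equals `arcsin (22√2/243)`, and `x - x³/6 < sin x < x` encloses it between two
rational multiples of `√2`. That `√2` cancels against the prefactor `6√2/5`. The remaining factor
has cube `80000/π⁴`, which a few decimals of `π` control.
-/

open Polynomial Set

theorem chebyshevU_three (R : Type*) [CommRing R] : Chebyshev.U R 3 = 8 * X ^ 3 - 4 * X := by
  rw [Chebyshev.U_eq]
  norm_num [Chebyshev.U_two, Chebyshev.U_one]
  ring

theorem chebyshevU_four (R : Type*) [CommRing R] :
    Chebyshev.U R 4 = 16 * X ^ 4 - 12 * X ^ 2 + 1 := by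
  rw [Chebyshev.U_eq]
  norm_num [chebyshevU_three, Chebyshev.U_two]
  ring

theorem sin_natCast_mul_arccos (n : ℕ) {x : ℝ} (hx₁ : -1 ≤ x) (hx₂ : x ≤ 1) :
    sin (n * arccos x) = (Chebyshev.U ℝ (n - 1)).eval x * √(1 - x ^ 2) := by
  simpa [cos_arccos hx₁ hx₂, sin_arccos] using (Chebyshev.U_real_cos (arccos x) (n - 1)).symm

theorem lt_arcsin {x : ℝ} (hx₀ : 0 < x) (hx₁ : x ≤ 1) : x < arcsin x := by
  simpa [sin_arcsin (by linarith) hx₁] using sin_lt (arcsin_pos.2 hx₀)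

theorem arcsin_lt_of_le_sub_cube {x y : ℝ} (hy₀ : 0 < y) (hy : y ≤ π / 2)
    (hxy : x ≤ y - y ^ 3 / 6) : arcsin x < y :=
  (arcsin_lt_iff_lt_sin' ⟨by linarith, hy⟩).2 (hxy.trans_lt (sin_gt_sub_cube hy₀))

/-- The dihedral angle `θ` of a regular tetrahedron. -/
noncomputable def dihedralAngle : ℝ := arccos (1 / 3)

/-- The deficit angle `ε_p` at an edge shared by `p` regular tetrahedra: what they leave uncovered
of a full turn. -/
noncomputable def deficitAngle (p : ℕ) : ℝ := 2 * π - p * dihedralAngle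

/-- The factor `(√2 N / (3π²)) ^ (2/3)` of the simplicial Ricci component. It equals `4 / ℓ²`,
where `ℓ` is the edge length for which `N` regular tetrahedra, each of volume `ℓ³ / (6√2)`, have
the total volume `2π²` of the unit 3-sphere. -/
noncomputable def edgeScale (N : ℕ) : ℝ := (√2 * N / (3 * π ^ 2)) ^ ((2 : ℝ) / 3)

/-- The simplicial Ricci component `c_p` of the triangulation of the 3-sphere by `N` regular
tetrahedra, `p` around each edge. The number `N` is kept as a parameter instead of being
determined by `p`. -/
noncomputable def simplicialRicci (p N : ℕ) : ℝ :=
  6 * √2 / p * edgeScale N * deficitAngle p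

theorem pi_div_three_lt_dihedralAngle : π / 3 < dihedralAngle := by
  rw [← arccos_cos (x := π / 3) (by positivity) (by linarith [pi_pos]), cos_pi_div_three]
  exact arccos_lt_arccos (by norm_num) (by norm_num) (by norm_num)

theorem dihedralAngle_lt_pi_div_two : dihedralAngle < π / 2 :=
  arccos_lt_pi_div_two.2 (by norm_num)

theorem sin_deficitAngle (p : ℕ) :
    sin (deficitAngle p) = -((Chebyshev.U ℝ (p - 1)).eval (1 / 3) * (2 * √2 / 3)) := by
  have sqrt_eq : √(1 - (1 / 3) ^ 2) = 2 * √2 / 3 := by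
    rw [sqrt_eq_iff_mul_self_eq_of_pos (by positivity)]
    linear_combination 4 / 9 * mul_self_sqrt (zero_le_two (α := ℝ))
  rw [deficitAngle, dihedralAngle, sin_two_pi_sub,
    sin_natCast_mul_arccos p (by norm_num) (by norm_num), sqrt_eq]

theorem deficitAngle_five_eq_arcsin : deficitAngle 5 = arcsin (22 * √2 / 243) := by
  have sin_eq : sin (deficitAngle 5) = 22 * √2 / 243 := by
    rw [sin_deficitAngle]
    norm_num [chebyshevU_four]
    ring
  have lower := pi_div_three_lt_dihedralAngle
  have upper := dihedralAngle_lt_pi_div_two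
  refine (arcsin_eq_of_sin_eq sin_eq ⟨?_, ?_⟩).symm <;>
    · rw [deficitAngle]
      push_cast
      linarith [pi_pos]

theorem deficitAngle_five_mem_Ioo : deficitAngle 5 ∈ Ioo (22 * √2 / 243) (√2 / 11) := by
  have sqrt_two_lt := sqrt_two_lt_three_halves
  have cube_eq : (√2) ^ 3 = 2 * √2 := by
    rw [pow_succ, sq_sqrt zero_le_two]
  rw [deficitAngle_five_eq_arcsin]
  constructor
  · exact lt_arcsin (by positivity) (by linarith)
  · refine arcsin_lt_of_le_sub_cube (by positivity) (by linarith [pi_gt_three]) ?_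
    rw [div_pow, cube_eq]
    linarith [sqrt_nonneg 2]

theorem edgeScale_pow_three (N : ℕ) : edgeScale N ^ 3 = 2 * N ^ 2 / (9 * π ^ 4) := by
  have rpow_pow_three {x : ℝ} (hx : 0 ≤ x) : (x ^ ((2 : ℝ) / 3)) ^ 3 = x ^ 2 := by
    rw [← rpow_mul_natCast hx]
    norm_num
  rw [edgeScale, rpow_pow_three (by positivity), div_pow, mul_pow, sq_sqrt zero_le_two]
  ring

theorem edgeScale_six_hundred_mem_Ioo : edgeScale 600 ∈ Ioo 9.35 9.39 := by
  have cube_eq : edgeScale 600 ^ 3 = 80000 / π ^ 4 := by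
    rw [edgeScale_pow_three]
    norm_num
    ring
  have scale_nonneg : 0 ≤ edgeScale 600 := rpow_nonneg (by positivity) _
  constructor
  · refine lt_of_pow_lt_pow_left₀ 3 scale_nonneg ?_
    calc (9.35 : ℝ) ^ 3 < 80000 / 3.1416 ^ 4 := by norm_num
      _ < 80000 / π ^ 4 := by gcongr; exact pi_lt_d4
      _ = edgeScale 600 ^ 3 := cube_eq.symm
  · refine lt_of_pow_lt_pow_left₀ 3 (by norm_num) ?_
    calc edgeScale 600 ^ 3 = 80000 / π ^ 4 := cube_eq
      _ < 80000 / 3.1415 ^ 4 := by gcongr; exact pi_gt_d4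
      _ < 9.39 ^ 3 := by norm_num

theorem simplicialRicci_five_six_hundred_mem_Ioo : simplicialRicci 5 600 ∈ Ioo 2.03 2.05 := by
  obtain ⟨scale_gt, scale_lt⟩ := edgeScale_six_hundred_mem_Ioo
  obtain ⟨deficit_gt, deficit_lt⟩ := deficitAngle_five_mem_Ioo
  have two_eq : √2 * √2 = 2 := mul_self_sqrt zero_le_two
  have deficit_pos : 0 < deficitAngle 5 := lt_trans (by positivity) deficit_gt
  rw [simplicialRicci, Nat.cast_ofNat]
  constructor
  · calc (2.03 : ℝ) < 6 * (√2 * √2) / 5 * 9.35 * (22 / 243) := by rw [two_eq]; norm_num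
      _ = 6 * √2 / 5 * 9.35 * (22 * √2 / 243) := by ring
      _ < 6 * √2 / 5 * edgeScale 600 * deficitAngle 5 := by gcongr
  · calc 6 * √2 / 5 * edgeScale 600 * deficitAngle 5
      _ < 6 * √2 / 5 * 9.39 * (√2 / 11) := by gcongr
      _ = 6 * (√2 * √2) / 5 * 9.39 / 11 := by ring
      _ < 2.05 := by rw [two_eq]; norm_num

/-- The 600-cell (`p = 5`, `N = 600`) value of the simplicial Ricci component
deviates from the continuum value `2` by about 2.0%. -/
theorem six_hundred_cell_Ricci_deviation :
    let θ : ℝ := Real.arccos (1 / 3)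
    let c₅ : ℝ := (6 * Real.sqrt 2 / 5) *
      ((Real.sqrt 2 * 600) / (3 * π ^ 2)) ^ ((2 : ℝ) / 3) * (2 * π - 5 * θ)
    0.015 < c₅ / 2 - 1 ∧ c₅ / 2 - 1 < 0.025 := by
  intro θ c₅
  have c₅_eq : c₅ = simplicialRicci 5 600 := by
    simp only [c₅, θ, simplicialRicci, edgeScale, deficitAngle, dihedralAngle, Nat.cast_ofNat]
  obtain ⟨ricci_gt, ricci_lt⟩ := simplicialRicci_five_six_hundred_mem_Ioo
  rw [c₅_eq]
  constructor <;> linarith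
end
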